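/- Soundness of rule L1: Let K be a statistical ALC knowledge base containing the conditional (A|B)[ℓ,1], where A, B are ALC concepts, and suppose K ⊨_l (B|⊤)[m,1] for a rational m with 0 ≤ m ≤ 1. Then K ⊨_l (A|⊤)[ℓ·m,1]. -/

import Mathlib

open scoped Classical

/-- ALC concepts over concept names and role names (both drawn from ℕ,
regarded as disjoint name spaces). -/
inductive Cpt : Type where
  | top : Cpt
  | atom : ℕ → Cpt
  | neg : Cpt → Cpt
  | inter : Cpt → Cpt → Cpt
  | ex : ℕ → Cpt → Cpt
deriving DecidableEq

/-- A finite interpretation with domain drawn from the type `α`. -/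
structure Interp (α : Type) where
  dom : Finset α
  dom_nonempty : dom.Nonempty
  conc : ℕ → Finset α
  conc_sub : ∀ a, conc a ⊆ dom
  role : ℕ → Finset (α × α)
  role_sub : ∀ r, role r ⊆ dom ×ˢ dom

/-- The extension `C^I` of a concept. -/
noncomputable def Interp.ext {α : Type} (I : Interp α) : Cpt → Finset α
  | .top => I.dom
  | .atom a => I.conc a
  | .neg c => I.dom \ I.ext c
  | .inter c d => I.ext c ∩ I.ext d
  | .ex r c => I.dom.filter (fun d => ∃ e ∈ I.ext c, (d, e) ∈ I.role r)

/-- `[C]^I`, the cardinality of the extension of `C`. -/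
noncomputable def cardC {α : Type} (I : Interp α) (c : Cpt) : ℕ := (I.ext c).card

/-- A probabilistic conditional `(C|D)[l,u]`. -/
structure Cond : Type where
  C : Cpt
  D : Cpt
  l : ℚ
  u : ℚ
deriving DecidableEq

/-- `I ⊨ (C|D)[l,u]` iff `[D]^I = 0` or `l ≤ [C ⊓ D]^I/[D]^I ≤ u`. -/
def satCond {α : Type} (I : Interp α) (κ : Cond) : Prop :=
  cardC I κ.D = 0 ∨
    (κ.l ≤ (cardC I (.inter κ.C κ.D) : ℚ) / (cardC I κ.D : ℚ) ∧
     (cardC I (.inter κ.C κ.D) : ℚ) / (cardC I κ.D : ℚ) ≤ κ.u)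

/-- Finite interpretations (with domain drawn from the countable set ℕ). -/
abbrev FInterp := Interp ℕ

/-- The models of a knowledge base (finite set of conditionals). -/
def Models (K : Finset Cond) : Set FInterp := {I | ∀ κ ∈ K, satCond I κ}

/-- l-entailment: every model of `K` satisfies the conditional. -/
def entailsL (K : Finset Cond) (κ : Cond) : Prop := ∀ I ∈ Models K, satCond I κ

theorem ext_sub_dom {α : Type} (I : Interp α) (c : Cpt) : I.ext c ⊆ I.dom := by
  induction c with
  | top => simp [Interp.ext]
  | atom a => simpa [Interp.ext] using I.conc_sub a
  | neg c ih => simp only [Interp.ext]; exact Finset.sdiff_subset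
  | inter c d ih1 ih2 =>
    simp only [Interp.ext]; exact Finset.inter_subset_left.trans ih1
  | ex r c ih => simp only [Interp.ext]; exact Finset.filter_subset _ _

theorem cardC_inter_top {α : Type} (I : Interp α) (c : Cpt) :
    cardC I (.inter c .top) = cardC I c := by
  simp only [cardC, Interp.ext]
  rw [Finset.inter_eq_left.mpr (ext_sub_dom I c)]

theorem cardC_inter_le {α : Type} (I : Interp α) (c d : Cpt) :
    cardC I (.inter c d) ≤ cardC I c := by
  simp only [cardC, Interp.ext]
  exact Finset.card_le_card Finset.inter_subset_left

/-- Soundness of rule L1. -/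
theorem rule_L1_sound (K : Finset Cond) (A B : Cpt) (l m : ℚ)
    (hl0 : 0 ≤ l) (hl1 : l ≤ 1) (hm0 : 0 ≤ m) (hm1 : m ≤ 1)
    (hmem : (⟨A, B, l, 1⟩ : Cond) ∈ K)
    (hent : entailsL K ⟨B, .top, m, 1⟩) :
    entailsL K ⟨A, .top, l * m, 1⟩ := by
  intro I hI
  have h1 := hI _ hmem
  have h2 := hent I hI
  have hT : 0 < cardC I .top := by
    simp only [cardC, Interp.ext]
    exact Finset.card_pos.mpr I.dom_nonempty
  have hTq : (0 : ℚ) < (cardC I .top : ℚ) := by exact_mod_cast hT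
  have hAT : cardC I A ≤ cardC I .top := by
    simp only [cardC, Interp.ext]
    exact Finset.card_le_card (ext_sub_dom I A)
  have hAB : cardC I (.inter A B) ≤ cardC I A := cardC_inter_le I A B
  have hATq : (cardC I A : ℚ) ≤ (cardC I .top : ℚ) := by exact_mod_cast hAT
  have hABq : (cardC I (.inter A B) : ℚ) ≤ (cardC I A : ℚ) := by exact_mod_cast hAB
  simp only [satCond, cardC_inter_top] at h1 h2 ⊢
  right
  have hmB : m * (cardC I .top : ℚ) ≤ (cardC I B : ℚ) := by
    rcases h2 with h2 | h2
    · omega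
    · exact (le_div_iff₀ hTq).mp h2.1
  have hlA : l * (cardC I B : ℚ) ≤ (cardC I (.inter A B) : ℚ) := by
    rcases h1 with h1 | h1
    · rw [h1]; simp
    · rcases Nat.eq_zero_or_pos (cardC I B) with h0 | h0
      · rw [h0]; simp
      · exact (le_div_iff₀ (by exact_mod_cast h0)).mp h1.1
  refine ⟨(le_div_iff₀ hTq).mpr ?_, (div_le_one hTq).mpr hATq⟩
  have := mul_le_mul_of_nonneg_left hmB hl0
  linarith
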